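/- A 0-1 matrix M : Fin n → Fin k → Bool is lonesum if and only if its rows and columns can be permuted into a staircase (Young diagram) form: there exist permutations σ of Fin n and τ of Fin k such that the matrix N defined by N i j = M (σ i) (τ j) satisfies both: whenever N i j = true and j' ≤ j then N i j' = true, and whenever N i j = true and i' ≤ i then N i' j = true. -/

import Mathlib

/-!
Both properties are equivalent to the rows of `M` forming a chain under inclusion of their supports
(`Nested`), that is, to `M` having no 2 × 2 submatrix equal to a permutation matrix.

* If such a submatrix exists, replacing it by the other permutation matrix changes `M` but no row or
  column sum, so a lonesum matrix is nested (`Lonesum.nested`).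
* In a nested matrix, a row with the larger sum contains the row with the smaller one
  (`Nested.apply_of_rowSum_le`), and nestedness is invariant under transposition. Sorting rows and
  columns by decreasing sums therefore gives the staircase form (`exists_perm_of_nested`).
* In a staircase, the entry `(i, j)` is true exactly when `i` is smaller than a threshold `c j`.
  The weight `2 * c j - (2 * i + 1)` is thus positive on the true entries and negative on the false
  ones, and it is a function of `i` plus a function of `j`. Hence any matrix with the same row and
  column sums has the same total weight, whereas `M` is the unique maximizer of the total weight
  (`lonesum_of_threshold`).
-/

/-- The row sum of row `i`: the number of columns `j` with `M i j = true`. -/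
def rowSum {n k : ℕ} (M : Fin n → Fin k → Bool) (i : Fin n) : ℕ :=
  (Finset.univ.filter fun j : Fin k => M i j = true).card

/-- The column sum of column `j`: the number of rows `i` with `M i j = true`. -/
def colSum {n k : ℕ} (M : Fin n → Fin k → Bool) (j : Fin k) : ℕ :=
  (Finset.univ.filter fun i : Fin n => M i j = true).card

/-- A 0-1 matrix is lonesum iff it is uniquely determined by its row and column sums. -/
def Lonesum {n k : ℕ} (M : Fin n → Fin k → Bool) : Prop :=
  ∀ N : Fin n → Fin k → Bool,
    (∀ i, rowSum N i = rowSum M i) → (∀ j, colSum N j = colSum M j) → N = M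

/-- The rows of `M` are pairwise comparable: `M` has no 2 × 2 submatrix (with rows `i`, `i'` and
columns `j`, `j'`) that is a permutation matrix. -/
def Nested {n k : ℕ} (M : Fin n → Fin k → Bool) : Prop :=
  ∀ i i' j j', M i j = true → M i j' = false → M i' j' = true → M i' j = true

lemma Nested.transpose {n k : ℕ} {M : Fin n → Fin k → Bool} (h : Nested M) :
    Nested (fun j i => M i j) := by
  intro j j' i i' h1 h2 h3
  by_contra h4
  have := h i' i j' j h3 (by simpa using h2) h1
  simp_all

lemma card_filter_comp_perm {m : ℕ} (e : Equiv.Perm (Fin m)) (p : Fin m → Bool) :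
    (Finset.univ.filter fun a => p (e a) = true).card =
      (Finset.univ.filter fun a => p a = true).card :=
  Finset.card_equiv e (by simp)

lemma Lonesum.nested {n k : ℕ} {M : Fin n → Fin k → Bool} (h : Lonesum M) : Nested M := by
  intro i i' j j' h1 h2 h3
  by_contra h4
  rw [Bool.not_eq_true] at h4
  have hij : j ≠ j' := by rintro rfl; simp_all
  -- The switched matrix: columns `j` and `j'` are exchanged within the rows `i` and `i'`.
  let N : Fin n → Fin k → Bool := fun a b =>
    if a = i ∨ a = i' then M a (Equiv.swap j j' b) else M a b
  -- Equivalently, rows `i` and `i'` are exchanged within the columns `j` and `j'`.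
  have hN : ∀ a b, N a b = if b = j ∨ b = j' then M (Equiv.swap i i' a) b else M a b := by
    intro a b
    simp only [N, Equiv.swap_apply_def]
    grind
  have hNM : N = M := by
    refine h N (fun a => ?_) (fun b => ?_)
    · by_cases ha : a = i ∨ a = i'
      · simp only [rowSum, N, if_pos ha]
        exact card_filter_comp_perm (Equiv.swap j j') (M a)
      · simp only [rowSum, N, if_neg ha]
    · by_cases hb : b = j ∨ b = j'
      · simp only [colSum, hN, if_pos hb]
        exact card_filter_comp_perm (Equiv.swap i i') (fun a => M a b)
      · simp only [colSum, hN, if_neg hb]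
  have h5 : N i j = M i j := by rw [hNM]
  simp [N, h1, h2] at h5

lemma Nested.apply_of_rowSum_le {n k : ℕ} {M : Fin n → Fin k → Bool} (h : Nested M)
    {i i' : Fin n} (hle : rowSum M i ≤ rowSum M i') {j : Fin k} (hj : M i j = true) :
    M i' j = true := by
  by_contra hnot
  -- Otherwise row `i'` is strictly contained in row `i`.
  have hlt : rowSum M i' < rowSum M i := by
    refine Finset.card_lt_card
      (Finset.ssubset_iff_of_subset ?_ |>.2 ⟨j, by simpa, by simpa using hnot⟩)
    intro b hb
    simp only [Finset.mem_filter, Finset.mem_univ, true_and] at hb ⊢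
    by_contra hb'
    exact hnot (h i i' j b hj (by simpa using hb') hb)
  omega

lemma exists_perm_antitone {m : ℕ} (f : Fin m → ℕ) :
    ∃ σ : Equiv.Perm (Fin m), ∀ a b, a ≤ b → f (σ b) ≤ f (σ a) :=
  ⟨Tuple.sort (fun a => OrderDual.toDual (f a)),
    fun _ _ hab => Tuple.monotone_sort (fun a => OrderDual.toDual (f a)) hab⟩

lemma exists_perm_of_nested {n k : ℕ} {M : Fin n → Fin k → Bool} (h : Nested M) :
    ∃ (σ : Equiv.Perm (Fin n)) (τ : Equiv.Perm (Fin k)),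
      (∀ (i : Fin n) (j j' : Fin k), M (σ i) (τ j) = true → j' ≤ j → M (σ i) (τ j') = true) ∧
      (∀ (i i' : Fin n) (j : Fin k), M (σ i) (τ j) = true → i' ≤ i → M (σ i') (τ j) = true) := by
  obtain ⟨σ, hσ⟩ := exists_perm_antitone (rowSum M)
  obtain ⟨τ, hτ⟩ := exists_perm_antitone (rowSum fun j i => M i j)
  exact ⟨σ, τ, fun i j j' hM hj => h.transpose.apply_of_rowSum_le (hτ j' j hj) hM,
    fun i i' j hM hi => h.apply_of_rowSum_le (hσ i' i hi) hM⟩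

/-- An initial segment of `Fin m` is cut out by its cardinality. -/
lemma exists_threshold {m : ℕ} (p : Fin m → Bool)
    (hp : ∀ a b, p a = true → b ≤ a → p b = true) :
    ∃ c : ℕ, ∀ a : Fin m, p a = true ↔ (a : ℕ) < c := by
  refine ⟨(Finset.univ.filter fun a => p a = true).card, fun a => ⟨fun ha => ?_, fun ha => ?_⟩⟩
  · have : Finset.Iic a ⊆ Finset.univ.filter fun a => p a = true := fun b hb => by
      simpa using hp a b ha (Finset.mem_Iic.1 hb)
    have := Finset.card_le_card this
    rw [Fin.card_Iic] at this
    omega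
  · by_contra hpa
    have : (Finset.univ.filter fun a => p a = true) ⊆ Finset.Iio a := fun b hb => by
      rw [Finset.mem_Iio]
      by_contra hab
      exact hpa (hp b a (by simpa using hb) (not_lt.1 hab))
    have := Finset.card_le_card this
    rw [Fin.card_Iio] at this
    omega

/-- A matrix whose true entries are those of positive weight, for nowhere vanishing weights of the
form `w i + v j`, is the unique matrix of maximal total weight among those with its row and column
sums; the total weight depends only on these sums. -/
lemma lonesum_of_threshold {n k : ℕ} {M : Fin n → Fin k → Bool} (w : Fin n → ℤ) (v : Fin k → ℤ)
    (hpos : ∀ i j, M i j = true → 0 < w i + v j)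
    (hneg : ∀ i j, M i j = false → w i + v j < 0) : Lonesum M := by
  intro N hrow hcol
  let d : Fin n → Fin k → ℤ := fun i j =>
    (if M i j = true then 1 else 0) - (if N i j = true then 1 else 0)
  have hd_row : ∀ i, ∑ j, d i j = 0 := by
    intro i
    have := hrow i
    simp only [rowSum] at this
    simp [d, Finset.sum_sub_distrib, Finset.sum_boole, this]
  have hd_col : ∀ j, ∑ i, d i j = 0 := by
    intro j
    have := hcol j
    simp only [colSum] at this
    simp [d, Finset.sum_sub_distrib, Finset.sum_boole, this]
  have hnonneg : ∀ i j, 0 ≤ (w i + v j) * d i j := by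
    intro i j
    have hp := hpos i j
    have hn := hneg i j
    cases hM : M i j <;> cases hN : N i j <;>
      simp only [d, hM, hN, reduceCtorEq, if_true, if_false] <;> grind
  have htotal : ∑ i, ∑ j, (w i + v j) * d i j = 0 := by
    have h1 : ∑ i, ∑ j, w i * d i j = 0 := by simp [← Finset.mul_sum, hd_row]
    have h2 : ∑ i, ∑ j, v j * d i j = 0 := by
      rw [Finset.sum_comm]
      simp [← Finset.mul_sum, hd_col]
    simp only [add_mul, Finset.sum_add_distrib, h1, h2, add_zero]
  funext i j
  have h1 := (Finset.sum_eq_zero_iff_of_nonneg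
    (fun i _ => Finset.sum_nonneg fun j _ => hnonneg i j)).1 htotal i (Finset.mem_univ i)
  have h2 := (Finset.sum_eq_zero_iff_of_nonneg (fun j _ => hnonneg i j)).1 h1 j (Finset.mem_univ j)
  have hp := hpos i j
  have hn := hneg i j
  cases hM : M i j <;> cases hN : N i j <;>
    simp only [d, hM, hN, reduceCtorEq, if_true, if_false] at h2 ⊢ <;> grind

/-- A 0-1 matrix is lonesum iff its rows and columns can be permuted into staircase
(Young diagram) form. -/
theorem lonesum_iff_staircase (n k : ℕ) (M : Fin n → Fin k → Bool) :
    Lonesum M ↔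
      ∃ (σ : Equiv.Perm (Fin n)) (τ : Equiv.Perm (Fin k)),
        (∀ (i : Fin n) (j j' : Fin k), M (σ i) (τ j) = true → j' ≤ j → M (σ i) (τ j') = true) ∧
        (∀ (i i' : Fin n) (j : Fin k), M (σ i) (τ j) = true → i' ≤ i → M (σ i') (τ j) = true) := by
  refine ⟨fun h => exists_perm_of_nested h.nested, ?_⟩
  rintro ⟨σ, τ, -, hcol⟩
  have hthr : ∀ j, ∃ c : ℕ, ∀ a : Fin n, M (σ a) j = true ↔ (a : ℕ) < c := fun j =>
    exists_threshold (fun a => M (σ a) j) fun a b ha hb => by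
      simpa using hcol a b (τ.symm j) (by simpa using ha) hb
  choose c hc using hthr
  -- Doubling and shifting by one makes every weight odd, hence nonzero.
  refine lonesum_of_threshold (fun i => -(2 * ((σ.symm i : Fin n) : ℤ) + 1)) (fun j => 2 * (c j : ℤ))
    (fun i j hM => ?_) (fun i j hM => ?_)
  · have := (hc j (σ.symm i)).1 (by simpa using hM)
    omega
  · have := mt (hc j (σ.symm i)).2 (by simp [hM])
    omega
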